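/- For every integer n ≥ 1, the Krull dimension of the ring ℂ[x_{ij}, y_{ij} (1 ≤ i,j ≤ 2n)] / I equals 2n² + 2n, where X = (x_{ij}) and Y = (y_{ij}) are the generic 2n×2n matrices, J is the standard symplectic matrix [[0, I_n],[−I_n, 0]], and I is the ideal generated by the entries of XY − YX together with the entries of XᵀJX − J and of YᵀJY − J. (This ring is the coordinate ring of the commuting variety C(Sp_{2n}) = {(a,b) ∈ Sp_{2n} × Sp_{2n} : ab = ba}, so this says dim C(Sp_{2n}) = (2n²+n) + n, i.e. the commuting probability p(Sp_{2n}) equals 1/2 + 1/(2(2n+1)).) -/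

import Mathlib

open MvPolynomial Matrix

/-- The polynomial ring `ℂ[x_{ij}, y_{ij}]` in `2 · (2n)²` variables. -/
noncomputable abbrev SpRing (n : ℕ) : Type :=
  MvPolynomial ((Fin (2 * n) × Fin (2 * n)) ⊕ (Fin (2 * n) × Fin (2 * n))) ℂ

/-- The generic matrix `X` of size `2n × 2n`, with entries the variables `x_{ij}`. -/
noncomputable def genX (n : ℕ) : Matrix (Fin (2 * n)) (Fin (2 * n)) (SpRing n) :=
  fun i j => X (Sum.inl (i, j))

/-- The generic matrix `Y` of size `2n × 2n`, with entries the variables `y_{ij}`. -/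
noncomputable def genY (n : ℕ) : Matrix (Fin (2 * n)) (Fin (2 * n)) (SpRing n) :=
  fun i j => X (Sum.inr (i, j))

/-- The standard symplectic matrix `J = [[0, I_n], [-I_n, 0]]`, as a `2n × 2n` matrix
(indices are reinterpreted via `finSumFinEquiv : Fin n ⊕ Fin n ≃ Fin (n + n)`). -/
noncomputable def sympJ (n : ℕ) (R : Type*) [CommRing R] :
    Matrix (Fin (2 * n)) (Fin (2 * n)) R :=
  Matrix.reindex
    ((finSumFinEquiv).trans (finCongr (by ring)))
    ((finSumFinEquiv).trans (finCongr (by ring)))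
    (Matrix.fromBlocks 0 1 (-1) 0)

/-!
In characteristic zero, the Krull dimension of a finitely generated `k`-algebra `A` is the largest
`K`-dimension of `Der k K`, where `K` runs over the fields with a map `A → K` that detects
derivations. Maps to `K` from the coordinate ring in question are pairs `X`, `Y` of commuting
isometries over `K` of an alternating form `J` on a space of dimension `2 n`.

*Upper bound.* The characteristic polynomial of `X` is palindromic, so the derivations killing its
coefficients have codimension at most `n`. For such a `D`, the `K[T]`-module defined by `X` carries
a connection along `D`, which forces `D X = [N, X]`; averaging over the adjoint involution makes
`N` skew-adjoint. If moreover `D X = 0`, then `(D Y) Y⁻¹` is skew-adjoint and commutes with `X`.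
Hence these `D` span at most the dimension of the image plus that of the kernel of `N ↦ [N, X]` on
skew-adjoint matrices, that is `2 n² + n`.

*Lower bound.* Take for `X` the Cayley transform of a generic Hamiltonian matrix `S`, which has
`2 n² + n` parameters, and for `Y` the Cayley transform of `∑ tₘ S ^ (2 m + 1)` with `n` further
parameters. A derivation killing `X` and `Y` kills all the parameters.
-/

section KrullDimension

theorem ringKrullDim_eq_of_isIntegral {R S : Type*} [CommRing R] [CommRing S] [Algebra R S]
    [Algebra.IsIntegral R S] [FaithfulSMul R S] : ringKrullDim R = ringKrullDim S := by
  apply le_antisymm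
  · refine iSup_le fun l ↦ ?_
    obtain ⟨Q, -, hQ, hQl⟩ := Ideal.exists_ideal_over_prime_of_isIntegral
      (S := S) l.head.asIdeal ⊥ (by
        rw [← RingHom.ker_eq_comap_bot,
          (RingHom.injective_iff_ker_eq_bot _).1 (FaithfulSMul.algebraMap_injective R S)]
        exact bot_le)
    have : Q.LiesOver l.head.asIdeal := ⟨hQl.symm⟩
    obtain ⟨L, hL, -⟩ := Ideal.exists_ltSeries_of_hasGoingUp (S := S) l Q
    exact le_iSup_of_le L (by rw [hL])
  · exact Order.krullDim_le_of_strictMono (PrimeSpectrum.comap (algebraMap R S)) fun I J hIJ ↦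
      Ideal.IsIntegral.comap_lt_comap (R := R) (I := I.asIdeal) (J := J.asIdeal) hIJ

variable {k K : Type*} [Field k] [Field K] [Algebra k K]

open scoped TensorProduct in
theorem finrank_derivation_eq_card_of_isAlgebraic [CharZero k] {σ : Type*} [Fintype σ]
    [Algebra (MvPolynomial σ k) K] [IsScalarTower k (MvPolynomial σ k) K]
    [FaithfulSMul (MvPolynomial σ k) K] [Algebra.IsAlgebraic (MvPolynomial σ k) K] :
    Module.finrank K (Derivation k K K) = Fintype.card σ := by
  let P := MvPolynomial σ k
  let L := FractionRing P
  let _ : Algebra L K := FractionRing.liftAlgebra P K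
  have : CharZero L := charZero_of_injective_algebraMap (FaithfulSMul.algebraMap_injective k L)
  have : Algebra.IsAlgebraic L K :=
    (IsFractionRing.comap_isAlgebraic_iff (A := P) (K := L) (C := K)).1 inferInstance
  have : Algebra.FormallyEtale P L := .of_isLocalization (nonZeroDivisors P)
  have : Algebra.FormallyEtale L K := .of_isSeparable L K
  have : Algebra.FormallyEtale P K := .comp P L K
  let differentials : Module.Basis σ K Ω[K⁄k] :=
    (Algebra.TensorProduct.basis K (KaehlerDifferential.mvPolynomialBasis k σ)).map
      (KaehlerDifferential.tensorKaehlerEquivOfFormallyEtale k P K)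
  have : Module.Finite K Ω[K⁄k] := .of_basis differentials
  calc Module.finrank K (Derivation k K K)
      = Module.finrank K (Module.Dual K Ω[K⁄k]) :=
        (KaehlerDifferential.linearMapEquivDerivation k K).finrank_eq.symm
    _ = Fintype.card σ := by
        rw [Subspace.dual_finrank_eq, Module.finrank_eq_card_basis differentials]

/-- The field of constants `ker D` of a derivation `D` of a field `K`. -/
def derivationConstants (D : Derivation k K K) : IntermediateField k K where
  carrier := {x | D x = 0}
  mul_mem' {a b} (ha : D a = 0) (hb : D b = 0) := by simp [ha, hb]
  add_mem' {a b} (ha : D a = 0) (hb : D b = 0) := by simp [ha, hb]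
  algebraMap_mem' := D.map_algebraMap
  inv_mem' a (ha : D a = 0) := by simp [D.leibniz_inv, ha]

theorem derivation_eq_zero_of_isIntegral_constants [CharZero K] (D : Derivation k K K) {z : K}
    (hz : IsIntegral (derivationConstants D) z) : D z = 0 := by
  let F := derivationConstants D
  let DF : Derivation F K K := .mk'
    { D.toAddMonoidHom with
      map_smul' := fun c x ↦ by
        have hc : D c = 0 := c.2
        simp [Algebra.smul_def, hc] }
    fun a b ↦ D.leibniz a b
  have hroot : Polynomial.aeval z (Polynomial.derivative (minpoly F z)) • DF z = 0 := by
    rw [← DF.map_aeval, minpoly.aeval, map_zero]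
  exact (smul_eq_zero.1 hroot).resolve_left
    ((minpoly.irreducible hz).separable.aeval_derivative_ne_zero (minpoly.aeval F z))

/-- `f : A → K` detects derivations if a derivation of `K` that vanishes on the image of `A` is
zero, i.e. if `Ω[K⁄A] = 0`. -/
def DetectsDerivations {A : Type*} [CommRing A] [Algebra k A] (f : A →ₐ[k] K) : Prop :=
  ∀ D : Derivation k K K, (∀ a, D (f a) = 0) → D = 0

variable {A : Type*} [CommRing A] [Algebra k A]

theorem derivation_apply_eq_zero_of_isIntegral [CharZero k] {P : Type*} [CommRing P] [Algebra k P]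
    {g : P →ₐ[k] A} (hg : g.IsIntegral) (f : A →ₐ[k] K) (D : Derivation k K K)
    (hD : ∀ p, D (f (g p)) = 0) (a : A) : D (f a) = 0 := by
  have : CharZero K := charZero_of_injective_algebraMap (algebraMap k K).injective
  obtain ⟨p, hp, hpa⟩ := hg a
  refine derivation_eq_zero_of_isIntegral_constants D
    ⟨p.map ((f.comp g).toRingHom.codRestrict (derivationConstants D) hD), hp.map _, ?_⟩
  rw [Polynomial.eval₂_map]
  have := congrArg f hpa
  rw [map_zero] at this
  rw [← this]
  exact (Polynomial.hom_eval₂ p g.toRingHom f.toRingHom a).symm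

theorem derivation_apply_eq_zero_of_mvPolynomial {σ : Type*} {f : MvPolynomial σ k →ₐ[k] K}
    {D : Derivation k K K} (hD : ∀ i, D (f (X i)) = 0) (p : MvPolynomial σ k) : D (f p) = 0 := by
  induction p using MvPolynomial.induction_on with
  | C a => exact (congrArg D (f.commutes a)).trans (D.map_algebraMap a)
  | add p q hp hq => rw [map_add, map_add, hp, hq, add_zero]
  | mul_X p i hp => simp [hp, hD]

theorem finrank_derivation_le_of_isIntegral [CharZero k] {σ : Type*} [Fintype σ]
    {g : MvPolynomial σ k →ₐ[k] A} (hg : g.IsIntegral) {f : A →ₐ[k] K}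
    (hf : DetectsDerivations f) :
    Module.finrank K (Derivation k K K) ≤ Fintype.card σ := by
  let ev : Derivation k K K →ₗ[K] (σ → K) :=
    { toFun := fun D i ↦ D (f (g (X i)))
      map_add' := fun _ _ ↦ rfl
      map_smul' := fun _ _ ↦ rfl }
  have hev : Function.Injective ev := by
    rw [← LinearMap.ker_eq_bot, LinearMap.ker_eq_bot']
    intro D hD
    exact hf D (derivation_apply_eq_zero_of_isIntegral hg f D
      (derivation_apply_eq_zero_of_mvPolynomial (f := f.comp g) (congrFun hD)))
  simpa using LinearMap.finrank_le_finrank_of_injective hev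

theorem ringKrullDim_eq_of_isIntegral_mvPolynomial {σ : Type*} [Fintype σ]
    {g : MvPolynomial σ k →ₐ[k] A} (hinj : Function.Injective g) (hint : g.IsIntegral) :
    ringKrullDim A = Fintype.card σ := by
  let _ : Algebra (MvPolynomial σ k) A := g.toRingHom.toAlgebra
  have : FaithfulSMul (MvPolynomial σ k) A := (faithfulSMul_iff_algebraMap_injective _ _).2 hinj
  have : Algebra.IsIntegral (MvPolynomial σ k) A := ⟨hint⟩
  rw [← ringKrullDim_eq_of_isIntegral (R := MvPolynomial σ k)]
  simp

theorem finrank_derivation_le_ringKrullDim [CharZero k] [Algebra.FiniteType k A] {f : A →ₐ[k] K}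
    (hf : DetectsDerivations f) :
    (Module.finrank K (Derivation k K K) : WithBot ℕ∞) ≤ ringKrullDim A := by
  have : Nontrivial A := f.toRingHom.domain_nontrivial
  obtain ⟨s, g, hinj, hint⟩ := exists_integral_inj_algHom_of_fg k A
  rw [ringKrullDim_eq_of_isIntegral_mvPolynomial hinj hint]
  exact_mod_cast finrank_derivation_le_of_isIntegral hint hf

theorem detectsDerivations_of_isFractionRing (B : Type*) [CommRing B] [IsDomain B] [Algebra k B]
    [Algebra B K] [IsScalarTower k B K] [IsFractionRing B K] :
    DetectsDerivations (IsScalarTower.toAlgHom k B K) := by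
  intro D hD
  ext z
  obtain ⟨a, b, -, rfl⟩ := IsFractionRing.div_surjective (A := B) z
  have hconst (b : B) : D (algebraMap B K b) = 0 := hD b
  simp [D.leibniz_div, hconst]

theorem exists_finrank_derivation_eq_ringKrullDim [CharZero k] [Nontrivial A]
    [Algebra.FiniteType k A] :
    ∃ (Q : Ideal A) (_ : Q.IsPrime), ringKrullDim A =
      Module.finrank (FractionRing (A ⧸ Q))
        (Derivation k (FractionRing (A ⧸ Q)) (FractionRing (A ⧸ Q))) := by
  obtain ⟨s, g, hinj, hint⟩ := exists_integral_inj_algHom_of_fg k A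
  let P := MvPolynomial (Fin s) k
  let _ : Algebra P A := g.toRingHom.toAlgebra
  have : IsScalarTower k P A := .of_algebraMap_eq fun x ↦ (g.commutes x).symm
  have : Algebra.IsIntegral P A := ⟨hint⟩
  obtain ⟨Q, -, hQ, hQP⟩ := Ideal.exists_ideal_over_prime_of_isIntegral (S := A) (⊥ : Ideal P) ⊥
    ((RingHom.injective_iff_ker_eq_bot (algebraMap P A)).1 hinj).le
  let B := A ⧸ Q
  have : FaithfulSMul P B := by
    rw [faithfulSMul_iff_algebraMap_injective, RingHom.injective_iff_ker_eq_bot, ← hQP]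
    ext x
    exact Ideal.Quotient.eq_zero_iff_mem
  have : FaithfulSMul P (FractionRing B) := .trans P B (FractionRing B)
  have : Algebra.IsAlgebraic B (FractionRing B) := IsLocalization.isAlgebraic _ (nonZeroDivisors B)
  have : Algebra.IsAlgebraic P (FractionRing B) := .trans P B (FractionRing B)
  refine ⟨Q, hQ, ?_⟩
  rw [ringKrullDim_eq_of_isIntegral_mvPolynomial hinj hint,
    finrank_derivation_eq_card_of_isAlgebraic (σ := Fin s)]

end KrullDimension

section Connections

variable {R : Type*} [CommRing R]

/-- `V` carries a connection along `δ`: an additive endomorphism `nabla` of `V` with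
`nabla (f v) = (δ f) v + f (nabla v)`. -/
def HasConnection (δ : Derivation ℤ R R) (V : Type*) [AddCommGroup V] [Module R V] : Prop :=
  ∃ nabla : V →+ V, ∀ (f : R) (v : V), nabla (f • v) = δ f • v + f • nabla v

variable {δ : Derivation ℤ R R}

theorem HasConnection.of_linearEquiv {V W : Type*} [AddCommGroup V] [Module R V] [AddCommGroup W]
    [Module R W] (e : V ≃ₗ[R] W) : HasConnection δ W → HasConnection δ V := by
  rintro ⟨nabla, hnabla⟩
  refine ⟨(e.symm.toAddEquiv.toAddMonoidHom.comp nabla).comp e.toAddEquiv.toAddMonoidHom,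
    fun f v ↦ ?_⟩
  simp [hnabla]

open scoped DirectSum in
theorem HasConnection.directSum {ι : Type*} {V : ι → Type*} [∀ i, AddCommGroup (V i)]
    [∀ i, Module R (V i)] (h : ∀ i, HasConnection δ (V i)) : HasConnection δ (⨁ i, V i) := by
  choose nabla hnabla using h
  refine ⟨DirectSum.map nabla, fun f v ↦ ?_⟩
  ext i : 1
  simp only [DirectSum.map_apply, DirectSum.smul_apply, DirectSum.add_apply, hnabla]

theorem HasConnection.quotient {I : Ideal R} (hI : ∀ x ∈ I, δ x ∈ I) :
    HasConnection δ (R ⧸ I) := by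
  refine ⟨QuotientAddGroup.map I.toAddSubgroup I.toAddSubgroup δ.toAddMonoidHom hI, fun f v ↦ ?_⟩
  obtain ⟨x, rfl⟩ := Submodule.Quotient.mk_surjective _ v
  change Submodule.Quotient.mk (δ (f * x)) = Submodule.Quotient.mk (δ f * x + f * δ x)
  rw [δ.leibniz, smul_eq_mul, smul_eq_mul]
  ring_nf

theorem pow_dvd_derivation_pow_mul {p : R} (hp : p ∣ δ p) (e : ℕ) (x : R) :
    p ^ e ∣ δ (p ^ e * x) := by
  obtain ⟨c, hc⟩ := hp
  rw [δ.leibniz, δ.leibniz_pow, hc]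
  refine dvd_add (dvd_mul_right _ _) (Dvd.dvd.mul_left ?_ _)
  cases e with
  | zero => simp
  | succ e =>
    refine ⟨(e + 1 : ℕ) * c, ?_⟩
    simp only [add_tsub_cancel_right, smul_eq_mul, nsmul_eq_mul]
    ring

theorem dvd_derivation_of_dvd_constant [IsDomain R] [WfDvdMonoid R] [Algebra ℚ R] {p χ : R}
    (hp : Prime p) (hpχ : p ∣ χ) (hχ : χ ≠ 0) (hδχ : δ χ = 0) : p ∣ δ p := by
  obtain ⟨q, hq, hpq⟩ :=
    (FiniteMultiplicity.of_prime_left hp hχ).exists_eq_pow_mul_and_not_dvd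
  obtain ⟨m, hm⟩ : ∃ m, multiplicity p χ = m + 1 := by
    refine Nat.exists_eq_succ_of_ne_zero fun h0 ↦ hpq ?_
    rw [h0, pow_zero, one_mul] at hq
    exact hq ▸ hpχ
  have hcancel : p ^ m * (p * δ q + q * ((m + 1 : ℕ) * δ p)) = 0 := by
    rw [hq, hm, δ.leibniz, δ.leibniz_pow] at hδχ
    simp only [add_tsub_cancel_right, smul_eq_mul, nsmul_eq_mul] at hδχ
    linear_combination hδχ
  have hdvd : p ∣ q * ((m + 1 : ℕ) * δ p) :=
    ⟨-δ q, by linear_combination (mul_eq_zero.1 hcancel).resolve_left (pow_ne_zero _ hp.ne_zero)⟩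
  have hunit : IsUnit ((m + 1 : ℕ) : R) := by
    simpa using (IsUnit.mk0 ((m + 1 : ℕ) : ℚ) (by positivity)).map (algebraMap ℚ R)
  exact hunit.dvd_mul_left.1 ((hp.dvd_or_dvd hdvd).resolve_left hpq)

theorem HasConnection.of_smul_eq_zero [IsDomain R] [IsPrincipalIdealRing R] [Algebra ℚ R]
    {V : Type*} [AddCommGroup V] [Module R V] [Module.Finite R V] {χ : R} (hχ : χ ≠ 0)
    (hδχ : δ χ = 0) (hV : ∀ v : V, χ • v = 0) : HasConnection δ V := by
  classical
  obtain ⟨ι, _, p, hp, e, ⟨E⟩⟩ := Module.equiv_directSum_of_isTorsion (R := R) (M := V)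
    fun {v} ↦ ⟨⟨χ, mem_nonZeroDivisors_of_ne_zero hχ⟩, hV v⟩
  have hdvd (i : ι) : p i ^ e i ∣ χ := by
    have h0 := congrArg (E · i)
      (hV (E.symm (DirectSum.of (fun i ↦ R ⧸ R ∙ p i ^ e i) i (Submodule.Quotient.mk 1))))
    simp only [map_smul, LinearEquiv.apply_symm_apply, map_zero, DirectSum.smul_apply,
      DirectSum.of_eq_same, DirectSum.zero_apply] at h0
    rw [← Submodule.Quotient.mk_smul, Submodule.Quotient.mk_eq_zero, smul_eq_mul, mul_one] at h0
    exact Ideal.mem_span_singleton.1 h0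
  refine .of_linearEquiv E (.directSum fun i ↦ .quotient fun x hx ↦ ?_)
  obtain ⟨y, rfl⟩ := Ideal.mem_span_singleton.1 hx
  refine Ideal.mem_span_singleton.2 ?_
  rcases eq_or_ne (e i) 0 with he | he
  · simp [he]
  · exact pow_dvd_derivation_pow_mul (dvd_derivation_of_dvd_constant (hp i).prime
      ((dvd_pow_self _ he).trans (hdvd i)) hχ hδχ) (e i) y

end Connections

section ConstantCharpoly

variable {ι K : Type*} [Fintype ι] [DecidableEq ι] [Field K] [CharZero K]

/- A matrix `A` turns `K ^ ι` into a `K[X]`-module killed by its characteristic polynomial, and a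
connection on this module is an additive map that is `D`-semilinear and commutes with `A`. -/
theorem exists_connection_commuting_of_derivation_charpoly_eq_zero (D : Derivation ℤ K K)
    {A : Matrix ι ι K} (hA : ∀ i, D (A.charpoly.coeff i) = 0) :
    ∃ nabla : (ι → K) →+ (ι → K), (∀ (c : K) w, nabla (c • w) = D c • w + c • nabla w) ∧
      ∀ w, nabla (A *ᵥ w) = A *ᵥ nabla w := by
  let _ : Differential K := ⟨D⟩
  let V := Module.AEval K (ι → K) (Matrix.toLin' A)
  let o : (ι → K) ≃ₗ[K] V := Module.AEval.of K (ι → K) (Matrix.toLin' A)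
  let δ : Derivation ℤ (Polynomial K) (Polynomial K) := Differential.mapCoeffs
  have hδC (c : K) : δ (Polynomial.C c) = Polynomial.C (D c) := Differential.mapCoeffs_C c
  have hδX : δ Polynomial.X = 0 := Differential.mapCoeffs_X
  have hχ : δ A.charpoly = 0 := by
    ext i
    exact (Differential.coeff_mapCoeffs _ i).trans (hA i)
  have hkill (v : V) : A.charpoly • v = 0 := by
    apply o.symm.injective
    rw [Module.AEval.of_symm_smul, ← Matrix.charpoly_toLin', LinearMap.aeval_self_charpoly]
    simp
  obtain ⟨nabla, hnabla⟩ : ∃ nabla : V →+ V, ∀ f v, nabla (f • v) = δ f • v + f • nabla v :=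
    HasConnection.of_smul_eq_zero A.charpoly_monic.ne_zero hχ hkill
  refine ⟨(o.symm.toAddEquiv.toAddMonoidHom.comp nabla).comp o.toAddEquiv.toAddMonoidHom,
    fun c w ↦ ?_, fun w ↦ ?_⟩
  · change o.symm (nabla (o (c • w))) = D c • w + c • o.symm (nabla (o w))
    rw [map_smul, ← Module.AEval.C_smul, hnabla, hδC, map_add, Module.AEval.C_smul,
      Module.AEval.C_smul, map_smul, map_smul, o.symm_apply_apply]
  · have h := congrArg o.symm (hnabla Polynomial.X (o w))
    rwa [hδX, zero_smul, zero_add, Module.AEval.X_smul_of,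
      Module.AEval.of_symm_X_smul] at h

theorem exists_commutator_eq_map_derivation_of_charpoly (D : Derivation ℤ K K) {A : Matrix ι ι K}
    (hA : ∀ i, D (A.charpoly.coeff i) = 0) : ∃ M : Matrix ι ι K, A.map D = M * A - A * M := by
  obtain ⟨nabla, hsmul, hcomm⟩ := exists_connection_commuting_of_derivation_charpoly_eq_zero D hA
  let L : (ι → K) →ₗ[K] (ι → K) :=
    { toFun := fun w ↦ D ∘ w - nabla w
      map_add' := fun v w ↦ by ext i; simp; ring
      map_smul' := fun c w ↦ by ext i; simp [hsmul]; ring }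
  have hL (w : ι → K) : L w = D ∘ w - nabla w := rfl
  have hleibniz (w : ι → K) : D ∘ (A *ᵥ w) = A.map D *ᵥ w + A *ᵥ (D ∘ w) := by
    ext i
    simp [Matrix.mulVec, dotProduct, Finset.sum_add_distrib, mul_comm, add_comm]
  refine ⟨LinearMap.toMatrix' L, Matrix.toLin'.injective (LinearMap.ext fun w ↦ ?_)⟩
  simp only [map_sub, Matrix.toLin'_mul, Matrix.toLin'_toMatrix', LinearMap.sub_apply,
    LinearMap.comp_apply, Matrix.toLin'_apply, hL, hcomm, hleibniz]
  abel

end ConstantCharpoly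

section FormAdjoint

variable {ι R : Type*} [Fintype ι] [DecidableEq ι] [CommRing R] {J X : Matrix ι ι R}

/-- The adjoint `J⁻¹ Mᵀ J` of a matrix `M` with respect to the bilinear form `vᵀ J w`. -/
noncomputable def formAdjoint (J : Matrix ι ι R) : Matrix ι ι R →ₗ[R] Matrix ι ι R :=
  LinearMap.mulRight R J ∘ₗ LinearMap.mulLeft R J⁻¹ ∘ₗ (transposeLinearEquiv ι ι R R).toLinearMap

theorem formAdjoint_apply (J M : Matrix ι ι R) : formAdjoint J M = J⁻¹ * Mᵀ * J := rfl

theorem formAdjoint_mul (hJ : IsUnit J.det) (M N : Matrix ι ι R) :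
    formAdjoint J (M * N) = formAdjoint J N * formAdjoint J M := by
  simp only [formAdjoint_apply, transpose_mul, Matrix.mul_assoc, mul_nonsing_inv_cancel_left J _ hJ]

theorem formAdjoint_formAdjoint (hJ : IsUnit J.det) (hJt : Jᵀ = -J) (M : Matrix ι ι R) :
    formAdjoint J (formAdjoint J M) = M := by
  have hinv : (-J)⁻¹ = -J⁻¹ := inv_eq_left_inv (by rw [neg_mul_neg, nonsing_inv_mul J hJ])
  simp only [formAdjoint_apply, transpose_mul, transpose_transpose, transpose_nonsing_inv, hJt,
    hinv, Matrix.mul_assoc, Matrix.neg_mul, Matrix.mul_neg, neg_neg, nonsing_inv_mul J hJ,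
    nonsing_inv_mul_cancel_left J _ hJ, Matrix.mul_one]

theorem mem_skewAdjointMatricesSubmodule_iff_formAdjoint (hJ : IsUnit J.det) {M : Matrix ι ι R} :
    M ∈ skewAdjointMatricesSubmodule J ↔ formAdjoint J M = -M := by
  rw [mem_skewAdjointMatricesSubmodule, formAdjoint_apply, Matrix.mul_assoc]
  refine ⟨fun h ↦ ?_, fun h ↦ ?_⟩
  · rw [show Mᵀ * J = J * -M from h, nonsing_inv_mul_cancel_left J _ hJ]
  · change Mᵀ * J = J * -M
    rw [← h, mul_nonsing_inv_cancel_left J _ hJ]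

theorem formAdjoint_mul_self_of_isometry (hJ : IsUnit J.det) (hX : Xᵀ * J * X = J) :
    formAdjoint J X * X = 1 := by
  rw [formAdjoint_apply, Matrix.mul_assoc, Matrix.mul_assoc, ← Matrix.mul_assoc Xᵀ, hX,
    nonsing_inv_mul J hJ]

theorem isUnit_det_of_isometry (hJ : IsUnit J.det) (hX : Xᵀ * J * X = J) : IsUnit X.det :=
  isUnit_det_of_left_inverse (formAdjoint_mul_self_of_isometry hJ hX)

theorem formAdjoint_eq_inv_of_isometry (hJ : IsUnit J.det) (hX : Xᵀ * J * X = J) :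
    formAdjoint J X = X⁻¹ :=
  (inv_eq_left_inv (formAdjoint_mul_self_of_isometry hJ hX)).symm

theorem det_mul_self_of_isometry (hJ : IsUnit J.det) (hX : Xᵀ * J * X = J) :
    X.det * X.det = 1 := by
  have h := congrArg det hX
  rw [det_mul, det_mul, det_transpose] at h
  exact hJ.mul_right_cancel (by linear_combination h)

theorem charpoly_inv_of_isometry (hJ : IsUnit J.det) (hX : Xᵀ * J * X = J) :
    X⁻¹.charpoly = X.charpoly := by
  rw [← formAdjoint_eq_inv_of_isometry hJ hX, formAdjoint_apply, Matrix.charpoly_mul_comm,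
    mul_nonsing_inv_cancel_left J _ hJ, charpoly_transpose]

theorem exists_charpoly_coeff_eq_of_isometry (hJ : IsUnit J.det) (hX : Xᵀ * J * X = J) :
    ∃ u : R, u * u = 1 ∧ ∀ i ≤ Fintype.card ι,
      X.charpoly.coeff i = u * X.charpoly.coeff (Fintype.card ι - i) := by
  nontriviality R
  refine ⟨(-1) ^ Fintype.card ι * X.det, ?_, fun i hi ↦ ?_⟩
  · rw [mul_mul_mul_comm, det_mul_self_of_isometry hJ hX, ← mul_pow]
    simp
  have hinv : Ring.inverse X.det = X.det :=
    Ring.inverse_unit (Units.mkOfMulEqOne _ _ (det_mul_self_of_isometry hJ hX))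
  have hrev := charpoly_inv X ((isUnit_iff_isUnit_det X).2 (isUnit_det_of_isometry hJ hX))
  rw [charpoly_inv_of_isometry hJ hX, ← reverse_charpoly, hinv,
    show (-1 : Polynomial R) ^ Fintype.card ι = Polynomial.C ((-1) ^ Fintype.card ι) by simp,
    ← Polynomial.C_mul] at hrev
  conv_lhs => rw [hrev]
  rw [Polynomial.coeff_C_mul, Polynomial.coeff_reverse, charpoly_natDegree_eq_dim,
    Polynomial.revAt_le hi]

/- With `M* = formAdjoint J M`, the averaged matrix `(M - M*) / 2` has the same commutator. -/
theorem exists_skewAdjoint_commutator_eq [Invertible (2 : R)] (hJ : IsUnit J.det) (hJt : Jᵀ = -J)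
    (hX : Xᵀ * J * X = J) {M : Matrix ι ι R}
    (hM : (M * X - X * M) * X⁻¹ ∈ skewAdjointMatricesSubmodule J) :
    ∃ N ∈ skewAdjointMatricesSubmodule J, N * X - X * N = M * X - X * M := by
  have hXu := isUnit_det_of_isometry hJ hX
  have hXadj := formAdjoint_eq_inv_of_isometry hJ hX
  have hXinvadj : formAdjoint J X⁻¹ = X := by rw [← hXadj, formAdjoint_formAdjoint hJ hJt]
  rw [mem_skewAdjointMatricesSubmodule_iff_formAdjoint hJ, formAdjoint_mul hJ, map_sub,
    formAdjoint_mul hJ, formAdjoint_mul hJ, hXadj, hXinvadj] at hM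
  have hcomm : formAdjoint J M * X - X * formAdjoint J M = -(M * X - X * M) := by
    have h := congrArg (· * X) hM
    simp only [Matrix.neg_mul, nonsing_inv_mul_cancel_right X _ hXu, Matrix.mul_sub,
      Matrix.sub_mul, Matrix.mul_assoc, mul_nonsing_inv_cancel_left X _ hXu] at h
    rw [← h]
  refine ⟨⅟(2 : R) • (M - formAdjoint J M), Submodule.smul_mem _ _ ?_, ?_⟩
  · rw [mem_skewAdjointMatricesSubmodule_iff_formAdjoint hJ, map_sub,
      formAdjoint_formAdjoint hJ hJt, neg_sub]
  · have h2 : (M - formAdjoint J M) * X - X * (M - formAdjoint J M) =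
        (2 : R) • (M * X - X * M) := by
      rw [Matrix.sub_mul, Matrix.mul_sub, sub_sub_sub_comm, hcomm, two_smul, sub_neg_eq_add]
    rw [Matrix.smul_mul, Matrix.mul_smul, ← smul_sub, h2, smul_smul, invOf_mul_self, one_smul]

end FormAdjoint

section MatrixDerivation

variable {ι k K : Type*} [CommRing k] [Field K] [Algebra k K]

/-- Entrywise application of derivations of `K` to a fixed matrix `Z`, as a `K`-linear map in the
derivation. -/
def derivationMatrix (Z : Matrix ι ι K) : Derivation k K K →ₗ[K] Matrix ι ι K where
  toFun D := Z.map D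
  map_add' _ _ := rfl
  map_smul' _ _ := rfl

theorem map_derivation_mul [Fintype ι] (D : Derivation k K K) (A B : Matrix ι ι K) :
    (A * B).map D = A.map D * B + A * B.map D := by
  ext i j
  simp [Matrix.mul_apply, Finset.sum_add_distrib, mul_comm, add_comm]

theorem map_derivation_map_algebraMap (D : Derivation k K K) (J : Matrix ι ι k) :
    (J.map (algebraMap k K)).map D = 0 := by
  ext i j
  exact D.map_algebraMap _

theorem map_derivation_one [DecidableEq ι] (D : Derivation k K K) :
    (1 : Matrix ι ι K).map D = 0 := by
  simpa using map_derivation_map_algebraMap D (1 : Matrix ι ι k)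

variable [Fintype ι] [DecidableEq ι]

theorem logDerivation_mem_skewAdjoint {J X : Matrix ι ι K} (hJ : IsUnit J.det)
    (hX : Xᵀ * J * X = J) {D : Derivation k K K} (hJD : J.map D = 0) :
    X.map D * X⁻¹ ∈ skewAdjointMatricesSubmodule J := by
  have hXu := isUnit_det_of_isometry hJ hX
  have hXtu : IsUnit Xᵀ.det := by rwa [det_transpose]
  have hDX := congrArg (·.map D) hX
  simp only [map_derivation_mul, hJD, Matrix.mul_zero, add_zero, transpose_map] at hDX
  rw [mem_skewAdjointMatricesSubmodule]
  change (X.map D * X⁻¹)ᵀ * J = J * -(X.map D * X⁻¹)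
  rw [transpose_mul, transpose_nonsing_inv, Matrix.mul_neg, ← add_eq_zero_iff_eq_neg]
  calc Xᵀ⁻¹ * (X.map D)ᵀ * J + J * (X.map D * X⁻¹)
      = Xᵀ⁻¹ * ((X.map D)ᵀ * J * X + Xᵀ * J * X.map D) * X⁻¹ := by
        simp only [Matrix.mul_add, Matrix.add_mul, Matrix.mul_assoc, mul_nonsing_inv X hXu,
          Matrix.mul_one, nonsing_inv_mul_cancel_left Xᵀ _ hXtu]
    _ = 0 := by rw [hDX, Matrix.mul_zero, Matrix.zero_mul]

theorem commutator_logDerivation_eq_zero {X Y : Matrix ι ι K} (hY : IsUnit Y.det)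
    (hXY : X * Y = Y * X) {D : Derivation k K K} (hX : X.map D = 0) :
    Y.map D * Y⁻¹ * X - X * (Y.map D * Y⁻¹) = 0 := by
  have hD := congrArg (·.map D) hXY
  simp only [map_derivation_mul, hX, Matrix.zero_mul, Matrix.mul_zero, zero_add, add_zero] at hD
  have hYinv : Y⁻¹ * X = X * Y⁻¹ := by
    calc Y⁻¹ * X = Y⁻¹ * (X * Y) * Y⁻¹ := by
          rw [Matrix.mul_assoc, mul_nonsing_inv_cancel_right Y _ hY]
      _ = X * Y⁻¹ := by rw [hXY, nonsing_inv_mul_cancel_left Y _ hY]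
  rw [Matrix.mul_assoc, hYinv, ← Matrix.mul_assoc, ← Matrix.mul_assoc, hD, sub_self]

theorem derivation_charpoly_coeff_eq_zero_of_isometry {J X : Matrix ι ι K} (hJ : IsUnit J.det)
    (hX : Xᵀ * J * X = J) {D : Derivation k K K}
    (hD : ∀ i < Fintype.card ι / 2, D (X.charpoly.coeff (i + 1)) = 0) (i : ℕ) :
    D (X.charpoly.coeff i) = 0 := by
  obtain ⟨u, hu, hpal⟩ := exists_charpoly_coeff_eq_of_isometry hJ hX
  have hDu : D u = 0 := by
    rcases mul_self_eq_one_iff.1 hu with rfl | rfl <;> simp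
  have hlow : ∀ i ≤ Fintype.card ι / 2, D (X.charpoly.coeff i) = 0
    | 0, _ => by
      have hlead : X.charpoly.coeff (Fintype.card ι) = 1 :=
        charpoly_natDegree_eq_dim X ▸ X.charpoly_monic.coeff_natDegree
      rw [hpal 0 (Nat.zero_le _), Nat.sub_zero, hlead, mul_one, hDu]
    | i + 1, hi => hD i hi
  rcases le_or_gt i (Fintype.card ι) with hi | hi
  · rcases le_or_gt i (Fintype.card ι / 2) with hi' | hi'
    · exact hlow i hi'
    · rw [hpal i hi, D.leibniz, hDu, hlow _ (by omega), smul_zero, smul_zero, add_zero]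
  · rw [Polynomial.coeff_eq_zero_of_natDegree_lt (by rwa [charpoly_natDegree_eq_dim]), map_zero]

theorem exists_skewAdjoint_commutator_eq_map_derivation [CharZero K] {J X : Matrix ι ι K}
    (hJ : IsUnit J.det) (hJt : Jᵀ = -J) (hX : Xᵀ * J * X = J) {D : Derivation k K K}
    (hJD : J.map D = 0) (hD : ∀ i, D (X.charpoly.coeff i) = 0) :
    ∃ N ∈ skewAdjointMatricesSubmodule J, N * X - X * N = X.map D := by
  obtain ⟨M, hM⟩ : ∃ M, X.map D = M * X - X * M :=
    exists_commutator_eq_map_derivation_of_charpoly (D.restrictScalars ℤ) hD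
  have : Invertible (2 : K) := invertibleOfNonzero two_ne_zero
  rw [hM]
  exact exists_skewAdjoint_commutator_eq hJ hJt hX (hM ▸ logDerivation_mem_skewAdjoint hJ hX hJD)

end MatrixDerivation

section DimensionBound

variable {K : Type*} [Field K]

theorem finrank_le_of_range_le_range {U V W : Type*} [AddCommGroup U] [Module K U]
    [AddCommGroup V] [Module K V] [AddCommGroup W] [Module K W] [Module.Finite K U]
    [Module.Finite K V] {g : V →ₗ[K] W} {T : U →ₗ[K] W} {h : V →ₗ[K] U}
    (hrange : LinearMap.range g ≤ LinearMap.range T) (hker : ∀ v, g v = 0 → T (h v) = 0)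
    (hinj : ∀ v, g v = 0 → h v = 0 → v = 0) : Module.finrank K V ≤ Module.finrank K U := by
  have hrestrict : Function.Injective (h.restrict (p := LinearMap.ker g) (q := LinearMap.ker T)
      hker) := by
    rw [← LinearMap.ker_eq_bot, LinearMap.ker_eq_bot']
    exact fun v hv ↦ Subtype.ext (hinj v v.2 (congrArg Subtype.val hv))
  rw [← g.finrank_range_add_finrank_ker, ← T.finrank_range_add_finrank_ker]
  exact add_le_add (Submodule.finrank_mono hrange)
    (LinearMap.finrank_le_finrank_of_injective hrestrict)

variable {ι k : Type*} [Fintype ι] [DecidableEq ι] {J X Y : Matrix ι ι K}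

theorem finrank_skewAdjointMatricesSubmodule_le (hJ : IsUnit J.det) (hJt : Jᵀ = -J) :
    Module.finrank K (skewAdjointMatricesSubmodule J) ≤ Fintype.card (Sym2 ι) := by
  let f : skewAdjointMatricesSubmodule J →ₗ[K] (Sym2 ι → K) :=
    { toFun := fun M s ↦ (J * M.1) s.out.1 s.out.2
      map_add' := fun M N ↦ by ext s; simp [Matrix.mul_add]
      map_smul' := fun c M ↦ by ext s; simp }
  have hf : Function.Injective f := by
    rw [← LinearMap.ker_eq_bot, LinearMap.ker_eq_bot']
    intro M hM
    have hsymm : (J * M.1).IsSymm := by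
      have hM := M.2
      rw [mem_skewAdjointMatricesSubmodule] at hM
      rw [IsSymm, transpose_mul, hJt, Matrix.mul_neg, show M.1ᵀ * J = J * -M.1 from hM,
        Matrix.mul_neg, neg_neg]
    have hJM : J * M.1 = 0 := by
      ext i j
      have h0 : (J * M.1) s(i, j).out.1 s(i, j).out.2 = 0 := congrFun hM s(i, j)
      have hout : s(s(i, j).out.1, s(i, j).out.2) = s(i, j) := Quot.out_eq _
      rcases Sym2.eq_iff.1 hout with ⟨hi, hj⟩ | ⟨hi, hj⟩
      · rwa [hi, hj] at h0
      · rwa [hi, hj, hsymm.apply] at h0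
    exact Subtype.ext (by simpa [hJM] using (nonsing_inv_mul_cancel_left J M.1 hJ).symm)
  simpa using LinearMap.finrank_le_finrank_of_injective hf

variable [CharZero K] [CommRing k] [Algebra k K]

/- For such `D` the matrix `D X` is a commutator `[N, X]` with `N` skew-adjoint, while the `D` with
`D X = 0` inject by `D ↦ (D Y) Y⁻¹` into the skew-adjoint matrices commuting with `X`. -/
theorem finrank_isospectral_derivation_le (hJ : IsUnit J.det) (hJt : Jᵀ = -J)
    (hJD : ∀ D : Derivation k K K, J.map D = 0) (hX : Xᵀ * J * X = J) (hY : Yᵀ * J * Y = J)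
    (hXY : X * Y = Y * X) (hgen : ∀ D : Derivation k K K, X.map D = 0 → Y.map D = 0 → D = 0)
    (V : Submodule K (Derivation k K K)) [Module.Finite K V]
    (hV : ∀ D ∈ V, ∀ i, D (X.charpoly.coeff i) = 0) :
    Module.finrank K V ≤ Module.finrank K (skewAdjointMatricesSubmodule J) := by
  have hYu := isUnit_det_of_isometry hJ hY
  let g : V →ₗ[K] Matrix ι ι K := derivationMatrix X ∘ₗ V.subtype
  let T : skewAdjointMatricesSubmodule J →ₗ[K] Matrix ι ι K :=
    (LinearMap.mulRight K X - LinearMap.mulLeft K X) ∘ₗ Submodule.subtype _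
  let h : V →ₗ[K] skewAdjointMatricesSubmodule J :=
    (LinearMap.mulRight K Y⁻¹ ∘ₗ derivationMatrix Y ∘ₗ V.subtype).codRestrict _
      fun D ↦ logDerivation_mem_skewAdjoint hJ hY (hJD D)
  refine finrank_le_of_range_le_range (g := g) (T := T) (h := h) ?_ (fun D hD ↦ ?_)
    fun D hDX hDY ↦ ?_
  · rintro _ ⟨D, rfl⟩
    obtain ⟨N, hN, hNX⟩ :=
      exists_skewAdjoint_commutator_eq_map_derivation hJ hJt hX (hJD D) (hV D D.2)
    exact ⟨⟨N, hN⟩, hNX⟩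
  · exact commutator_logDerivation_eq_zero hYu hXY hD
  · have hlog : Y.map D.1 * Y⁻¹ = 0 := congrArg Subtype.val hDY
    refine Subtype.ext (hgen D.1 hDX ?_)
    rw [← nonsing_inv_mul_cancel_right Y (Y.map D.1) hYu, hlog, Matrix.zero_mul]

theorem finrank_derivation_le_of_commuting_isometries (hJ : IsUnit J.det) (hJt : Jᵀ = -J)
    (hJD : ∀ D : Derivation k K K, J.map D = 0) (hX : Xᵀ * J * X = J) (hY : Yᵀ * J * Y = J)
    (hXY : X * Y = Y * X) (hgen : ∀ D : Derivation k K K, X.map D = 0 → Y.map D = 0 → D = 0) :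
    Module.finrank K (Derivation k K K) ≤ Fintype.card ι / 2 + Fintype.card (Sym2 ι) := by
  have : Module.Finite K (Derivation k K K) := by
    refine Module.Finite.of_injective ((derivationMatrix X).prod (derivationMatrix Y)) ?_
    rw [← LinearMap.ker_eq_bot, LinearMap.ker_eq_bot']
    exact fun D hD ↦ hgen D (congrArg Prod.fst hD) (congrArg Prod.snd hD)
  let coeffs : Derivation k K K →ₗ[K] (Fin (Fintype.card ι / 2) → K) :=
    { toFun := fun D i ↦ D (X.charpoly.coeff (i + 1))
      map_add' := fun _ _ ↦ rfl
      map_smul' := fun _ _ ↦ rfl }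
  have hcoeffs (D) (hD : D ∈ LinearMap.ker coeffs) (i : ℕ) : D (X.charpoly.coeff i) = 0 :=
    derivation_charpoly_coeff_eq_zero_of_isometry hJ hX (fun i hi ↦ congrFun hD ⟨i, hi⟩) i
  rw [← coeffs.finrank_range_add_finrank_ker]
  refine add_le_add ?_ ?_
  · simpa using (LinearMap.range coeffs).finrank_le
  · exact (finrank_isospectral_derivation_le hJ hJt hJD hX hY hXY hgen _ hcoeffs).trans
      (finrank_skewAdjointMatricesSubmodule_le hJ hJt)

end DimensionBound

section CoordinateRing

variable {ι k : Type*} [CommRing k]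

variable (ι k) in
/-- The polynomial ring in the entries of a pair of generic `ι × ι` matrices. -/
abbrev MatrixPairRing : Type _ := MvPolynomial ((ι × ι) ⊕ (ι × ι)) k

variable (ι k) in
/-- The first matrix of the generic pair. -/
noncomputable def genericFst : Matrix ι ι (MatrixPairRing ι k) := fun i j ↦ X (Sum.inl (i, j))

variable (ι k) in
/-- The second matrix of the generic pair. -/
noncomputable def genericSnd : Matrix ι ι (MatrixPairRing ι k) := fun i j ↦ X (Sum.inr (i, j))

/-- The ideal of the variety of pairs of commuting isometries of the bilinear form `vᵀ J w`. -/
noncomputable def commutingIsometryIdeal [Fintype ι] (J : Matrix ι ι k) :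
    Ideal (MatrixPairRing ι k) :=
  let X := genericFst ι k
  let Y := genericSnd ι k
  let J' := J.map (algebraMap k (MatrixPairRing ι k))
  Ideal.span ({p | ∃ i j, p = (X * Y - Y * X) i j} ∪
    {p | ∃ i j, p = (Xᵀ * J' * X - J') i j} ∪ {p | ∃ i j, p = (Yᵀ * J' * Y - J') i j})

theorem entries_subset_ker_iff {R S : Type*} [CommRing R] [CommRing S] (f : R →+* S)
    (M : Matrix ι ι R) : {p | ∃ i j, p = M i j} ⊆ (RingHom.ker f : Set R) ↔ M.map f = 0 := by
  refine ⟨fun h ↦ Matrix.ext fun i j ↦ h ⟨i, j, rfl⟩, ?_⟩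
  rintro h _ ⟨i, j, rfl⟩
  exact congrFun₂ h i j

theorem commutingIsometryIdeal_le_ker_iff [Fintype ι] {S : Type*} [CommRing S] [Algebra k S]
    {J : Matrix ι ι k} (f : MatrixPairRing ι k →ₐ[k] S) {X Y : Matrix ι ι S}
    (hX : (genericFst ι k).map f = X) (hY : (genericSnd ι k).map f = Y) :
    commutingIsometryIdeal J ≤ RingHom.ker f ↔ X * Y = Y * X ∧
      Xᵀ * J.map (algebraMap k S) * X = J.map (algebraMap k S) ∧
      Yᵀ * J.map (algebraMap k S) * Y = J.map (algebraMap k S) := by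
  have hJ : (J.map (algebraMap k (MatrixPairRing ι k))).map f = J.map (algebraMap k S) := by
    ext i j
    exact f.commutes _
  have hker (M : Matrix ι ι (MatrixPairRing ι k)) :
      {p | ∃ i j, p = M i j} ⊆ (RingHom.ker f : Set (MatrixPairRing ι k)) ↔ M.map f = 0 :=
    entries_subset_ker_iff f.toRingHom M
  rw [commutingIsometryIdeal, Ideal.span_le, Set.union_subset_iff, Set.union_subset_iff]
  simp only [hker, Matrix.map_sub _ (map_sub f), Matrix.map_mul, transpose_map, hX, hY, hJ,
    sub_eq_zero, and_assoc]

end CoordinateRing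

section CoordinateRingDimension

variable {ι k : Type*} [Fintype ι] [Field k] [CharZero k] {J : Matrix ι ι k}

theorem finrank_derivation_le_ringKrullDim_of_commuting_isometries {K : Type*} [Field K]
    [Algebra k K] {X Y : Matrix ι ι K} (hXY : X * Y = Y * X)
    (hX : Xᵀ * J.map (algebraMap k K) * X = J.map (algebraMap k K))
    (hY : Yᵀ * J.map (algebraMap k K) * Y = J.map (algebraMap k K))
    (hgen : ∀ D : Derivation k K K, X.map D = 0 → Y.map D = 0 → D = 0) :
    (Module.finrank K (Derivation k K K) : WithBot ℕ∞) ≤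
      ringKrullDim (MatrixPairRing ι k ⧸ commutingIsometryIdeal J) := by
  let f : MatrixPairRing ι k →ₐ[k] K := aeval (Sum.elim (fun p ↦ X p.1 p.2) fun p ↦ Y p.1 p.2)
  have hfst : (genericFst ι k).map f = X := by ext; simp [genericFst, f]
  have hsnd : (genericSnd ι k).map f = Y := by ext; simp [genericSnd, f]
  have hker : commutingIsometryIdeal J ≤ RingHom.ker f :=
    (commutingIsometryIdeal_le_ker_iff f hfst hsnd).2 ⟨hXY, hX, hY⟩
  refine finrank_derivation_le_ringKrullDim
    (f := Ideal.Quotient.liftₐ (commutingIsometryIdeal J) f hker) fun D hD ↦ ?_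
  have hDf (p : MatrixPairRing ι k) : D (f p) = 0 := hD (Ideal.Quotient.mk _ p)
  refine hgen D ?_ ?_
  · rw [← hfst]
    exact Matrix.ext fun i j ↦ hDf _
  · rw [← hsnd]
    exact Matrix.ext fun i j ↦ hDf _

theorem ringKrullDim_commutingIsometry_le [DecidableEq ι] (hJ : IsUnit J.det) (hJt : Jᵀ = -J) :
    ringKrullDim (MatrixPairRing ι k ⧸ commutingIsometryIdeal J) ≤
      (Fintype.card ι / 2 + Fintype.card (Sym2 ι) : ℕ) := by
  let A := MatrixPairRing ι k ⧸ commutingIsometryIdeal J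
  rcases subsingleton_or_nontrivial A with _ | _
  · exact (ringKrullDim_eq_bot_of_subsingleton (R := A)).le.trans bot_le
  obtain ⟨Q, _, hQ⟩ := exists_finrank_derivation_eq_ringKrullDim (k := k) (A := A)
  let K := FractionRing (A ⧸ Q)
  have : CharZero K := charZero_of_injective_algebraMap (algebraMap k K).injective
  let π : A →ₐ[k] K := (IsScalarTower.toAlgHom k (A ⧸ Q) K).comp (Ideal.Quotient.mkₐ k Q)
  let f : MatrixPairRing ι k →ₐ[k] K := π.comp (Ideal.Quotient.mkₐ k _)
  have hker : commutingIsometryIdeal J ≤ RingHom.ker f := fun p hp ↦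
    (congrArg π (Ideal.Quotient.eq_zero_iff_mem.2 hp)).trans (map_zero π)
  obtain ⟨hXY, hX, hY⟩ := (commutingIsometryIdeal_le_ker_iff f rfl rfl).1 hker
  have hJK : IsUnit (J.map (algebraMap k K)).det := by
    rw [← RingHom.mapMatrix_apply, ← RingHom.map_det]
    exact hJ.map _
  have hJKt : (J.map (algebraMap k K))ᵀ = -J.map (algebraMap k K) := by
    ext i j
    simpa using congrArg (algebraMap k K) (congrFun₂ hJt i j)
  change ringKrullDim A ≤ _
  rw [hQ, Nat.cast_le]
  refine finrank_derivation_le_of_commuting_isometries hJK hJKt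
    (map_derivation_map_algebraMap · J) hX hY hXY fun D hDX hDY ↦ ?_
  refine detectsDerivations_of_isFractionRing (A ⧸ Q) D fun b ↦ ?_
  obtain ⟨a, rfl⟩ := Ideal.Quotient.mk_surjective b
  obtain ⟨p, rfl⟩ := Ideal.Quotient.mk_surjective a
  refine derivation_apply_eq_zero_of_mvPolynomial (f := f) ?_ p
  rintro (⟨i, j⟩ | ⟨i, j⟩)
  exacts [congrFun₂ hDX i j, congrFun₂ hDY i j]

end CoordinateRingDimension

section Cayley

variable {ι R : Type*} [Fintype ι] [DecidableEq ι] [CommRing R] {J S Z : Matrix ι ι R}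

/-- The Cayley transform `(1 + S) (1 - S)⁻¹`, which takes skew-adjoint matrices to isometries.
It is only meaningful when `1 - S` is invertible. -/
noncomputable def cayley (S : Matrix ι ι R) : Matrix ι ι R := (1 + S) * (1 - S)⁻¹

theorem cayley_mul_one_sub (hS : IsUnit (1 - S).det) : cayley S * (1 - S) = 1 + S :=
  nonsing_inv_mul_cancel_right (1 - S) _ hS

theorem commute_cayley_right (hS : IsUnit (1 - S).det) (h : Commute Z S) :
    Commute Z (cayley S) := by
  have hsub : Commute Z (1 - S) := (Commute.one_right Z).sub_right h
  have hinv : Commute Z (1 - S)⁻¹ := by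
    obtain ⟨u, hu⟩ := (isUnit_iff_isUnit_det _).2 hS
    rw [← hu, ← coe_units_inv]
    exact (hu ▸ hsub : Commute Z u).units_inv_right
  exact ((Commute.one_right Z).add_right h).mul_right hinv

theorem isometry_cayley (hS : IsUnit (1 - S).det) (hSJ : S ∈ skewAdjointMatricesSubmodule J) :
    (cayley S)ᵀ * J * cayley S = J := by
  rw [mem_skewAdjointMatricesSubmodule] at hSJ
  replace hSJ : Sᵀ * J = J * -S := hSJ
  have hadd : (1 + S)ᵀ * J = J * (1 - S) := by
    rw [transpose_add, Matrix.add_mul, hSJ, transpose_one, Matrix.one_mul, sub_eq_add_neg,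
      Matrix.mul_add, Matrix.mul_one]
  have hsub : (1 - S)ᵀ * J = J * (1 + S) := by
    rw [transpose_sub, Matrix.sub_mul, hSJ, transpose_one, Matrix.one_mul, Matrix.mul_neg,
      sub_neg_eq_add, Matrix.mul_add, Matrix.mul_one]
  have hcancel : (1 - S)ᵀ⁻¹ * (1 - S)ᵀ = 1 := nonsing_inv_mul _ (by rwa [det_transpose])
  calc (cayley S)ᵀ * J * cayley S
      = (1 - S)ᵀ⁻¹ * ((1 + S)ᵀ * J) * (1 + S) * (1 - S)⁻¹ := by
        simp only [cayley, transpose_mul, transpose_nonsing_inv, Matrix.mul_assoc]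
    _ = (1 - S)ᵀ⁻¹ * J * ((1 - S) * (1 + S)) * (1 - S)⁻¹ := by
        simp only [hadd, Matrix.mul_assoc]
    _ = (1 - S)ᵀ⁻¹ * (J * (1 + S)) * ((1 - S) * (1 - S)⁻¹) := by
        rw [show (1 - S) * (1 + S) = (1 + S) * (1 - S) by noncomm_ring]
        simp only [Matrix.mul_assoc]
    _ = J := by
        rw [mul_nonsing_inv _ hS, Matrix.mul_one, ← hsub, ← Matrix.mul_assoc, hcancel,
          Matrix.one_mul]

variable {k K : Type*} [CommRing k] [Field K] [Algebra k K]

theorem map_derivation_pow_eq_zero {D : Derivation k K K} {S : Matrix ι ι K} (hS : S.map D = 0)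
    (m : ℕ) : (S ^ m).map D = 0 := by
  induction m with
  | zero => rw [pow_zero, map_derivation_one]
  | succ m ih =>
    rw [pow_succ, map_derivation_mul, ih, hS, Matrix.zero_mul, Matrix.mul_zero, add_zero]

theorem map_derivation_eq_zero_of_cayley [NeZero (2 : K)] {D : Derivation k K K}
    {S : Matrix ι ι K} (hS : IsUnit (1 - S).det) (hD : (cayley S).map D = 0) : S.map D = 0 := by
  have hdiff : (cayley S + 1) * S.map D = 0 := by
    have h := congrArg (·.map D) (cayley_mul_one_sub hS)
    simp only [map_derivation_mul, hD, Matrix.map_sub _ (map_sub D), Matrix.map_add _ (map_add D),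
      map_derivation_one, Matrix.zero_mul, zero_add, zero_sub, Matrix.mul_neg] at h
    rw [Matrix.add_mul, Matrix.one_mul, add_eq_zero_iff_neg_eq, h]
  have htwo : (1 - S) * (cayley S + 1) = (2 : K) • 1 := by
    have hcomm : Commute (1 - S) (cayley S) :=
      commute_cayley_right hS ((Commute.one_left S).sub_left (Commute.refl S))
    rw [Matrix.mul_add, hcomm.eq, cayley_mul_one_sub hS, Matrix.mul_one, two_smul]
    abel
  have h := congrArg ((1 - S) * ·) hdiff
  simp only [← Matrix.mul_assoc, htwo, Matrix.smul_mul, Matrix.one_mul, Matrix.mul_zero] at h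
  exact (smul_eq_zero.1 h).resolve_left two_ne_zero

end Cayley

section OddPolynomial

variable {ι R : Type*} [Fintype ι] [DecidableEq ι] [CommRing R] {n : ℕ}

/-- The odd polynomial `∑ m, tₘ S ^ (2 m + 1)` in the matrix `S`. -/
def oddPolynomial (t : Fin n → R) (S : Matrix ι ι R) : Matrix ι ι R :=
  ∑ m, t m • S ^ (2 * (m : ℕ) + 1)

theorem oddPolynomial_zero (S : Matrix ι ι R) : oddPolynomial (0 : Fin n → R) S = 0 := by
  simp [oddPolynomial]

theorem oddPolynomial_mem_skewAdjoint {J S : Matrix ι ι R}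
    (hS : S ∈ skewAdjointMatricesSubmodule J) (t : Fin n → R) :
    oddPolynomial t S ∈ skewAdjointMatricesSubmodule J := by
  refine Submodule.sum_mem _ fun m _ ↦ Submodule.smul_mem _ _ ?_
  rw [mem_skewAdjointMatricesSubmodule] at hS ⊢
  have hsemiconj : SemiconjBy J (-S) Sᵀ := Eq.symm hS
  have hpow := (hsemiconj.pow_right (2 * m + 1)).eq
  rw [Odd.neg_pow ⟨(m : ℕ), rfl⟩, ← transpose_pow] at hpow
  exact hpow.symm

theorem commute_oddPolynomial (t : Fin n → R) (S : Matrix ι ι R) :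
    Commute S (oddPolynomial t S) :=
  Commute.sum_right _ _ _ fun m _ ↦ (Commute.self_pow S _).smul_right (t m)

theorem oddPolynomial_map {R' : Type*} [CommRing R'] (f : R →+* R') (t : Fin n → R)
    (S : Matrix ι ι R) : (oddPolynomial t S).map f = oddPolynomial (f ∘ t) (S.map f) := by
  have hpow (m : ℕ) : (S ^ m).map f = S.map f ^ m := map_pow f.mapMatrix S m
  ext i j
  simp [oddPolynomial, Matrix.sum_apply, ← hpow]

/-- The diagonal entries indexed by `e` of the first `n` odd powers of `S`, as columns. -/
def oddPowerDiag (e : Fin n → ι) (S : Matrix ι ι R) : Matrix (Fin n) (Fin n) R :=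
  of fun i m ↦ (S ^ (2 * (m : ℕ) + 1)) (e i) (e i)

theorem oddPowerDiag_map {R' : Type*} [CommRing R'] (f : R →+* R') (e : Fin n → ι)
    (S : Matrix ι ι R) : (oddPowerDiag e S).map f = oddPowerDiag e (S.map f) := by
  ext i m
  exact congrFun₂ (map_pow f.mapMatrix S (2 * (m : ℕ) + 1)) (e i) (e i)

theorem det_oddPowerDiag_diagonal (e : Fin n → ι) (d : ι → R) :
    (oddPowerDiag e (diagonal d)).det = (∏ i, d (e i)) * (vandermonde fun i ↦ d (e i) ^ 2).det := by
  rw [← det_mul_column]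
  congr 1
  ext i m
  simp [oddPowerDiag, diagonal_pow, pow_succ', pow_mul]

theorem derivation_eq_zero_of_map_oddPolynomial_eq_zero {k K : Type*} [CommRing k] [Field K]
    [Algebra k K] {D : Derivation k K K} {S : Matrix ι ι K} {t : Fin n → K} {e : Fin n → ι}
    (hdet : (oddPowerDiag e S).det ≠ 0) (hS : S.map D = 0) (ht : (oddPolynomial t S).map D = 0)
    (m : Fin n) : D (t m) = 0 := by
  refine congrFun (eq_zero_of_mulVec_eq_zero hdet (v := D ∘ t) (funext fun i ↦ ?_)) m
  have hpow (m : Fin n) : D ((S ^ (2 * (m : ℕ) + 1)) (e i) (e i)) = 0 :=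
    congrFun₂ (map_derivation_pow_eq_zero hS _) (e i) (e i)
  have hi : D (oddPolynomial t S (e i) (e i)) = 0 := congrFun₂ ht (e i) (e i)
  simpa [oddPolynomial, Matrix.sum_apply, hpow, oddPowerDiag, mulVec, dotProduct] using hi

end OddPolynomial

section Symplectic

variable (n : ℕ) (R : Type*) [CommRing R]

/-- The indexing of the two halves of the standard symplectic basis used by `sympJ`. -/
def sympIndex : Fin n ⊕ Fin n ≃ Fin (2 * n) := finSumFinEquiv.trans (finCongr (by ring))

theorem sympJ_eq_neg_submatrix_J :
    sympJ n R = -(Matrix.J (Fin n) R).submatrix (sympIndex n).symm (sympIndex n).symm := by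
  change _ = (-Matrix.J (Fin n) R).submatrix _ _
  rw [Matrix.J, fromBlocks_neg, neg_zero, neg_neg]
  rfl

theorem sympJ_mul_self : sympJ n R * sympJ n R = -1 := by
  rw [sympJ_eq_neg_submatrix_J, neg_mul_neg, submatrix_mul_equiv, J_squared, submatrix_neg]
  simp

theorem sympJ_transpose : (sympJ n R)ᵀ = -sympJ n R := by
  rw [sympJ_eq_neg_submatrix_J, transpose_neg, transpose_submatrix, J_transpose, submatrix_neg]
  rfl

theorem isUnit_det_sympJ : IsUnit (sympJ n R).det :=
  isUnit_det_of_left_inverse (B := -sympJ n R) (by rw [neg_mul, sympJ_mul_self, neg_neg])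

variable {n R}

theorem sympJ_map {R' : Type*} [CommRing R'] (f : R →+* R') :
    (sympJ n R).map f = sympJ n R' := by
  simp [sympJ, ← submatrix_map, fromBlocks_map, Matrix.map_neg]

/-- The Hamiltonian matrix `J B` attached to the symmetric matrix `B` with entries `s`; these are
the elements of the symplectic Lie algebra. -/
noncomputable def hamiltonian (s : Sym2 (Fin (2 * n)) → R) :
    Matrix (Fin (2 * n)) (Fin (2 * n)) R :=
  sympJ n R * of fun i j ↦ s s(i, j)

theorem sympJ_mul_hamiltonian (s : Sym2 (Fin (2 * n)) → R) :
    sympJ n R * hamiltonian s = -of fun i j ↦ s s(i, j) := by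
  rw [hamiltonian, ← Matrix.mul_assoc, sympJ_mul_self, neg_mul, one_mul]

theorem hamiltonian_mem_skewAdjoint (s : Sym2 (Fin (2 * n)) → R) :
    hamiltonian s ∈ skewAdjointMatricesSubmodule (sympJ n R) := by
  have hsymm : (of fun i j ↦ s s(i, j) : Matrix _ _ R)ᵀ = of fun i j ↦ s s(i, j) := by
    ext i j
    simp only [transpose_apply, of_apply, Sym2.eq_swap]
  rw [mem_skewAdjointMatricesSubmodule]
  change (hamiltonian s)ᵀ * sympJ n R = sympJ n R * -hamiltonian s
  rw [mul_neg, sympJ_mul_hamiltonian, hamiltonian, transpose_mul, hsymm, sympJ_transpose,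
    Matrix.mul_assoc, neg_mul, sympJ_mul_self, neg_neg, neg_neg, mul_one]

theorem hamiltonian_map {R' : Type*} [CommRing R'] (f : R →+* R') (s : Sym2 (Fin (2 * n)) → R) :
    (hamiltonian s).map f = hamiltonian (f ∘ s) := by
  rw [hamiltonian, Matrix.map_mul, sympJ_map]
  rfl

theorem hamiltonian_zero : hamiltonian (0 : Sym2 (Fin (2 * n)) → R) = 0 :=
  Matrix.mul_zero _

theorem diagonal_mul_sympJ (a : Fin n → R) :
    diagonal (Sum.elim a (-a) ∘ (sympIndex n).symm) * sympJ n R =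
      -(sympJ n R * diagonal (Sum.elim a (-a) ∘ (sympIndex n).symm)) := by
  have hblocks : diagonal (Sum.elim a (-a)) * Matrix.J (Fin n) R =
      -(Matrix.J (Fin n) R * diagonal (Sum.elim a (-a))) := by
    rw [show Sum.elim a (-a) = Sum.elim a (fun i ↦ -a i) from rfl, ← fromBlocks_diagonal,
      Matrix.J, fromBlocks_multiply, fromBlocks_multiply, fromBlocks_neg]
    simp
  rw [sympJ_eq_neg_submatrix_J, ← submatrix_diagonal_equiv, mul_neg, neg_mul, submatrix_mul_equiv,
    submatrix_mul_equiv, hblocks]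
  rfl

theorem exists_hamiltonian_eq_diagonal (a : Fin n → R) :
    ∃ s, hamiltonian s = diagonal (Sum.elim a (-a) ∘ (sympIndex n).symm) := by
  let A := diagonal (Sum.elim a (-a) ∘ (sympIndex n).symm)
  have hsymm (i j) : (sympJ n R * A) i j = (sympJ n R * A) j i := by
    refine congrFun₂ (?_ : (sympJ n R * A) = (sympJ n R * A)ᵀ) i j
    rw [transpose_mul, sympJ_transpose, diagonal_transpose, mul_neg, diagonal_mul_sympJ, neg_neg]
  let s : Sym2 (Fin (2 * n)) → R :=
    Sym2.lift ⟨fun i j ↦ -(sympJ n R * A) i j, fun i j ↦ congrArg _ (hsymm i j)⟩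
  have hs : (of fun i j ↦ s s(i, j)) = -(sympJ n R * A) := rfl
  refine ⟨s, ?_⟩
  rw [hamiltonian, hs, mul_neg, ← Matrix.mul_assoc, sympJ_mul_self, neg_mul, neg_neg, one_mul]

end Symplectic

section GenericSymplectic

theorem map_one_sub {ι R R' : Type*} [DecidableEq ι] [CommRing R] [CommRing R'] (f : R →+* R')
    (A : Matrix ι ι R) : (1 - A).map f = 1 - A.map f := by
  rw [Matrix.map_sub _ (map_sub f), Matrix.map_one _ (map_zero f) (map_one f)]

theorem det_ne_zero_of_algebraicIndependent {ι σ k K : Type*} [Fintype ι] [DecidableEq ι]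
    [CommRing k] [CommRing K] [Algebra k K] {x : σ → K} (hx : AlgebraicIndependent k x)
    {A : Matrix ι ι (MvPolynomial σ k)} (v : σ → k) (hA : (A.map (eval v)).det ≠ 0) :
    (A.map (eval₂Hom (algebraMap k K) x)).det ≠ 0 := by
  rw [← RingHom.mapMatrix_apply, ← RingHom.map_det] at hA ⊢
  intro h
  have hdet : A.det = 0 := hx (h.trans (map_zero _).symm)
  exact hA (by rw [hdet, map_zero])

variable {n : ℕ} {k K : Type*} [Field k] [Field K] [Algebra k K] {s : Sym2 (Fin (2 * n)) → K}
  {t : Fin n → K}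

theorem det_one_sub_hamiltonian_ne_zero (hs : AlgebraicIndependent k s) :
    (1 - hamiltonian s).det ≠ 0 := by
  have hX : eval₂Hom (algebraMap k K) s ∘ X = s := funext (eval₂Hom_X' _ s)
  have hX0 : eval (0 : Sym2 (Fin (2 * n)) → k) ∘ X = 0 := funext fun p ↦ eval_X p
  have h := det_ne_zero_of_algebraicIndependent hs (A := 1 - hamiltonian X) 0 (by
    rw [map_one_sub, hamiltonian_map, hX0, hamiltonian_zero, sub_zero, det_one]
    exact one_ne_zero)
  rwa [map_one_sub, hamiltonian_map, hX] at h

theorem det_one_sub_oddPolynomial_ne_zero (hst : AlgebraicIndependent k (Sum.elim s t)) :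
    (1 - oddPolynomial t (hamiltonian s)).det ≠ 0 := by
  have hs : eval₂Hom (algebraMap k K) (Sum.elim s t) ∘ X ∘ Sum.inl = s :=
    funext fun p ↦ eval₂Hom_X' _ _ (Sum.inl p)
  have ht : eval₂Hom (algebraMap k K) (Sum.elim s t) ∘ X ∘ Sum.inr = t :=
    funext fun m ↦ eval₂Hom_X' _ _ (Sum.inr m)
  have ht0 : eval (0 : Sym2 (Fin (2 * n)) ⊕ Fin n → k) ∘ X ∘ Sum.inr = 0 :=
    funext fun m ↦ eval_X (Sum.inr m)
  have h := det_ne_zero_of_algebraicIndependent hst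
    (A := 1 - oddPolynomial (X ∘ Sum.inr) (hamiltonian (X ∘ Sum.inl))) 0 (by
      rw [map_one_sub, oddPolynomial_map, ht0, oddPolynomial_zero, sub_zero, det_one]
      exact one_ne_zero)
  rwa [map_one_sub, oddPolynomial_map, hamiltonian_map, hs, ht] at h

theorem det_oddPowerDiag_hamiltonian_ne_zero [CharZero k] (hs : AlgebraicIndependent k s) :
    (oddPowerDiag (sympIndex n ∘ Sum.inl) (hamiltonian s)).det ≠ 0 := by
  obtain ⟨v, hv⟩ := exists_hamiltonian_eq_diagonal fun i : Fin n ↦ ((i + 1 : ℕ) : k)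
  have hX : eval₂Hom (algebraMap k K) s ∘ X = s := funext (eval₂Hom_X' _ s)
  have hXv : eval v ∘ X = v := funext fun p ↦ eval_X p
  suffices h : ((oddPowerDiag (sympIndex n ∘ Sum.inl) (hamiltonian X)).map (eval v)).det ≠ 0 by
    have h' := det_ne_zero_of_algebraicIndependent hs v h
    rwa [oddPowerDiag_map, hamiltonian_map, hX] at h'
  rw [oddPowerDiag_map, hamiltonian_map, hXv, hv, det_oddPowerDiag_diagonal]
  simp only [Function.comp_apply, Equiv.symm_apply_apply, Sum.elim_inl]
  refine mul_ne_zero (Finset.prod_ne_zero_iff.2 fun i _ ↦ Nat.cast_ne_zero.2 i.1.succ_ne_zero)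
    (det_vandermonde_ne_zero_iff.2 fun i j hij ↦ ?_)
  have hsq : ((i : ℕ) + 1) ^ 2 = ((j : ℕ) + 1) ^ 2 := by exact_mod_cast hij
  exact Fin.ext (Nat.succ_injective (Nat.pow_left_injective two_ne_zero hsq))

theorem finrank_derivation_le_ringKrullDim_sympJ [CharZero k]
    (hst : AlgebraicIndependent k (Sum.elim s t))
    (hgen : ∀ D : Derivation k K K, (∀ p, D (s p) = 0) → (∀ m, D (t m) = 0) → D = 0) :
    (Module.finrank K (Derivation k K K) : WithBot ℕ∞) ≤
      ringKrullDim (MatrixPairRing (Fin (2 * n)) k ⧸ commutingIsometryIdeal (sympJ n k)) := by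
  have hs : AlgebraicIndependent k s := hst.comp Sum.inl Sum.inl_injective
  have : CharZero K := charZero_of_injective_algebraMap (algebraMap k K).injective
  have hS : IsUnit (1 - hamiltonian s).det := (det_one_sub_hamiltonian_ne_zero hs).isUnit
  have hZ : IsUnit (1 - oddPolynomial t (hamiltonian s)).det :=
    (det_one_sub_oddPolynomial_ne_zero hst).isUnit
  have hcomm : Commute (cayley (hamiltonian s)) (cayley (oddPolynomial t (hamiltonian s))) :=
    commute_cayley_right hZ (commute_cayley_right hS (commute_oddPolynomial t _).symm).symm
  have hskew := hamiltonian_mem_skewAdjoint s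
  refine finrank_derivation_le_ringKrullDim_of_commuting_isometries hcomm.eq ?_ ?_
    fun D hDX hDY ↦ ?_
  · rw [sympJ_map]
    exact isometry_cayley hS hskew
  · rw [sympJ_map]
    exact isometry_cayley hZ (oddPolynomial_mem_skewAdjoint hskew t)
  have hDS := map_derivation_eq_zero_of_cayley hS hDX
  have hDZ := map_derivation_eq_zero_of_cayley hZ hDY
  refine hgen D (Sym2.ind fun i j ↦ ?_) (derivation_eq_zero_of_map_oddPolynomial_eq_zero
    (det_oddPowerDiag_hamiltonian_ne_zero hs) hDS hDZ)
  have hJS : (sympJ n K * hamiltonian s).map D = 0 := by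
    rw [map_derivation_mul, hDS, ← sympJ_map (algebraMap k K), map_derivation_map_algebraMap,
      Matrix.zero_mul, Matrix.mul_zero, add_zero]
  rw [sympJ_mul_hamiltonian] at hJS
  simpa using congrFun₂ hJS i j

variable (n k)

theorem add_card_sym2_fin_two_mul : n + Fintype.card (Sym2 (Fin (2 * n))) = 2 * n ^ 2 + 2 * n := by
  rw [Sym2.card, Fintype.card_fin, Nat.choose_two_right, Nat.add_sub_cancel,
    show (2 * n + 1) * (2 * n) = 2 * (2 * n ^ 2 + n) by ring, Nat.mul_div_cancel_left _ two_pos]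
  ring

theorem le_ringKrullDim_sympJ [CharZero k] : ((2 * n ^ 2 + 2 * n : ℕ) : WithBot ℕ∞) ≤
    ringKrullDim (MatrixPairRing (Fin (2 * n)) k ⧸ commutingIsometryIdeal (sympJ n k)) := by
  let P := MvPolynomial (Sym2 (Fin (2 * n)) ⊕ Fin n) k
  let K := FractionRing P
  let s (p : Sym2 (Fin (2 * n))) : K := algebraMap P K (X (Sum.inl p))
  let t (m : Fin n) : K := algebraMap P K (X (Sum.inr m))
  have hst : AlgebraicIndependent k (Sum.elim s t) := by
    have h := (algebraicIndependent_X (Sym2 (Fin (2 * n)) ⊕ Fin n) k).map'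
      (f := IsScalarTower.toAlgHom k P K) (IsFractionRing.injective P K)
    convert h using 1
    ext (p | m) <;> rfl
  have : Algebra.IsAlgebraic P K := IsLocalization.isAlgebraic _ (nonZeroDivisors P)
  have hfinrank : Module.finrank K (Derivation k K K) = 2 * n ^ 2 + 2 * n := by
    rw [finrank_derivation_eq_card_of_isAlgebraic (σ := Sym2 (Fin (2 * n)) ⊕ Fin n),
      Fintype.card_sum, Fintype.card_fin, add_comm, add_card_sym2_fin_two_mul]
  rw [← hfinrank]
  refine finrank_derivation_le_ringKrullDim_sympJ hst fun D hs ht ↦ ?_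
  refine detectsDerivations_of_isFractionRing P D (derivation_apply_eq_zero_of_mvPolynomial ?_)
  rintro (p | m)
  exacts [hs p, ht m]

end GenericSymplectic

theorem krullDim_commutingVariety_Sp_general (k : Type*) [Field k] [CharZero k] (n : ℕ) :
    ringKrullDim (MatrixPairRing (Fin (2 * n)) k ⧸ commutingIsometryIdeal (sympJ n k)) =
      ((2 * n ^ 2 + 2 * n : ℕ) : WithBot ℕ∞) := by
  refine le_antisymm ?_ (le_ringKrullDim_sympJ n k)
  have hle := ringKrullDim_commutingIsometry_le (isUnit_det_sympJ n k) (sympJ_transpose n k)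
  rwa [Fintype.card_fin, Nat.mul_div_cancel_left n two_pos, add_card_sym2_fin_two_mul] at hle

/-- The coordinate ring of the commuting variety `C(Sp_{2n})` has Krull dimension
`2n² + 2n = (2n² + n) + n`. -/
theorem krullDim_commutingVariety_Sp (n : ℕ) (hn : 1 ≤ n) :
    ringKrullDim
      (SpRing n ⧸
        Ideal.span
          ({p | ∃ i j, p = (genX n * genY n - genY n * genX n) i j} ∪
           {p | ∃ i j, p =
              ((genX n)ᵀ * sympJ n (SpRing n) * genX n - sympJ n (SpRing n)) i j} ∪
           {p | ∃ i j, p =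
              ((genY n)ᵀ * sympJ n (SpRing n) * genY n - sympJ n (SpRing n)) i j})) =
    ((2 * n ^ 2 + 2 * n : ℕ) : WithBot (WithTop ℕ)) := by
  have h := krullDim_commutingVariety_Sp_general ℂ n
  rwa [commutingIsometryIdeal, sympJ_map] at h
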